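/- Let m, n, N ≥ 1 with N ≥ mn, let s ≥ 1, let R ⊆ [N] be a set of row indices with |R| = s, and let C ⊆ [m]×[n] be a set of column indices with |C| = s. Then the set of pairs (P, Q) ∈ ℝ^{N×m} × ℝ^{N×n} for which the s×s submatrix of the row-wise Khatri-Rao product P ⊙ Q with rows R and columns C is singular has Lebesgue measure zero in ℝ^{N·m + N·n}. -/

import Mathlib

/-- The row-wise Khatri-Rao product of `P : ℝ^{N×m}` and `Q : ℝ^{N×n}`. -/
def rowKhatriRao {N m n : Type*} (P : Matrix N m ℝ) (Q : Matrix N n ℝ) :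
    Matrix N (m × n) ℝ :=
  fun i jl => P i jl.1 * Q i jl.2

/-! The determinant of `[P ⊙ Q]_{R,C}` is an analytic function of `(P, Q)`. It takes the value `1`
when the row of `P ⊙ Q` selected by the `i`-th element of `R` is the basis vector indexed by the
`i`-th element `(j, l)` of `C`, that is `e_j ⊗ e_l`. An analytic function that does not vanish at
`x₀` has only countably many zeros on each line through `x₀`, so by Fubini its zero set is null. -/

open MeasureTheory Filter

section NullZeroSet

variable {E : Type*} [NormedAddCommGroup E] [NormedSpace ℝ E]

theorem ae_of_ae_ae_add_smul [FiniteDimensional ℝ E] [MeasurableSpace E] [BorelSpace E]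
    (μ : Measure E) [μ.IsAddHaarMeasure] {p : E → Prop} (hp : MeasurableSet {x | p x}) (x₀ : E)
    (h : ∀ᵐ v ∂μ, ∀ᵐ t : ℝ, p (x₀ + t • v)) : ∀ᵐ x ∂μ, p x := by
  have hmeas : MeasurableSet {q : E × ℝ | p (x₀ + q.2 • q.1)} :=
    hp.preimage (f := fun q : E × ℝ => x₀ + q.2 • q.1) (by fun_prop)
  have hswap : ∀ᵐ t : ℝ, ∀ᵐ v ∂μ, p (x₀ + t • v) :=
    (Measure.ae_ae_comm (p := fun v t => p (x₀ + t • v)) hmeas).1 h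
  -- One `t ≠ 0` suffices, because the inverse of `v ↦ x₀ + t • v` then preserves null sets.
  obtain ⟨t, ht, ht₀⟩ := (hswap.and (Measure.ae_ne volume (0 : ℝ))).exists
  have hpreimage : μ ((t • ·) ⁻¹' ((x₀ + ·) ⁻¹' {x | ¬ p x})) = 0 := ht
  rw [Measure.addHaar_preimage_smul μ ht₀, measure_preimage_add, mul_eq_zero] at hpreimage
  exact hpreimage.resolve_left (by simp [ht₀])

theorem ae_ne_zero_of_analyticOnNhd_one_dim {𝕜 G : Type*} [NontriviallyNormedField 𝕜]
    [ConnectedSpace 𝕜] [SecondCountableTopology 𝕜] [MeasurableSpace 𝕜]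
    [NormedAddCommGroup G] [NormedSpace 𝕜 G] (μ : Measure 𝕜) [NullSingletonClass μ] {g : 𝕜 → G}
    (hg : AnalyticOnNhd 𝕜 g Set.univ) {t₀ : 𝕜} (ht₀ : g t₀ ≠ 0) : ∀ᵐ t ∂μ, g t ≠ 0 := by
  have hle : ae μ ≤ codiscrete 𝕜 := by
    rw [← Measure.restrict_univ (μ := μ)]
    exact ae_restrict_le_codiscreteWithin MeasurableSet.univ
  exact hle (hg.preimage_zero_mem_codiscrete ht₀)

theorem ae_ne_zero_of_analyticOnNhd [FiniteDimensional ℝ E] [MeasurableSpace E] [BorelSpace E]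
    {F : Type*} [NormedAddCommGroup F] [NormedSpace ℝ F] (μ : Measure E) [μ.IsAddHaarMeasure]
    {f : E → F} (hf : AnalyticOnNhd ℝ f Set.univ) {x₀ : E}
    (hx₀ : f x₀ ≠ 0) : ∀ᵐ x ∂μ, f x ≠ 0 := by
  have hcont : Continuous f := continuousOn_univ.1 hf.continuousOn
  have hopen : IsOpen {x | f x ≠ 0} := isOpen_ne.preimage hcont
  refine ae_of_ae_ae_add_smul μ hopen.measurableSet x₀ (.of_forall fun v => ?_)
  have hline : AnalyticOnNhd ℝ (fun t : ℝ => f (x₀ + t • v)) Set.univ := fun t _ =>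
    (hf (x₀ + t • v) trivial).comp_of_eq (g := f) (f := fun t : ℝ => x₀ + t • v) (by fun_prop) rfl
  exact ae_ne_zero_of_analyticOnNhd_one_dim volume hline (t₀ := 0) (by simpa using hx₀)

end NullZeroSet

theorem analyticAt_matrix_det {𝕜 E A ι : Type*} [NontriviallyNormedField 𝕜]
    [NormedAddCommGroup E] [NormedSpace 𝕜 E] [NormedCommRing A] [NormedAlgebra 𝕜 A]
    [Fintype ι] [DecidableEq ι] {M : E → Matrix ι ι A} {x : E}
    (hM : ∀ i j, AnalyticAt 𝕜 (fun y => M y i j) x) : AnalyticAt 𝕜 (fun y => (M y).det) x := by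
  simp only [Matrix.det_apply']
  exact Finset.analyticAt_fun_sum _ fun σ _ =>
    analyticAt_const.mul (Finset.analyticAt_fun_prod _ fun i _ => hM (σ i) i)

section RowKhatriRao

variable {ι N m n : Type*}

theorem exists_rowKhatriRao_submatrix_eq_one [DecidableEq ι] {r : ι → N}
    (hr : Function.Injective r) {c : ι → m × n} (hc : Function.Injective c) :
    ∃ (P : Matrix N m ℝ) (Q : Matrix N n ℝ), (rowKhatriRao P Q).submatrix r c = 1 := by
  classical
  refine ⟨Matrix.of (Function.extend r (fun i => Pi.single (c i).1 1) 0),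
    Matrix.of (Function.extend r (fun i => Pi.single (c i).2 1) 0), ?_⟩
  ext i k
  calc
    _ = (if (c k).1 = (c i).1 then (1 : ℝ) else 0) * (if (c k).2 = (c i).2 then 1 else 0) := by
      simp only [Matrix.submatrix_apply, rowKhatriRao, Matrix.of_apply, hr.extend_apply,
        Pi.single_apply]
    _ = if c k = c i then 1 else 0 := by
      simp only [boole_mul, Prod.ext_iff, ite_and]
    _ = (1 : Matrix ι ι ℝ) i k := by
      simp only [hc.eq_iff, Matrix.one_apply, eq_comm]

variable [Fintype ι] [DecidableEq ι] [Fintype N] [Fintype m] [Fintype n]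

theorem analyticOnNhd_det_rowKhatriRao_submatrix (r : ι → N) (c : ι → m × n) :
    AnalyticOnNhd ℝ (fun pq : (N → m → ℝ) × (N → n → ℝ) =>
      ((rowKhatriRao (Matrix.of pq.1) (Matrix.of pq.2)).submatrix r c).det) Set.univ := by
  refine fun pq _ => analyticAt_matrix_det fun i k => ?_
  have hP : AnalyticAt ℝ (fun pq : (N → m → ℝ) × (N → n → ℝ) => pq.1 (r i) (c k).1) pq :=
    (ContinuousLinearMap.proj (c k).1 ∘L ContinuousLinearMap.proj (r i) ∘L
      ContinuousLinearMap.fst ℝ (N → m → ℝ) (N → n → ℝ)).analyticAt pq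
  have hQ : AnalyticAt ℝ (fun pq : (N → m → ℝ) × (N → n → ℝ) => pq.2 (r i) (c k).2) pq :=
    (ContinuousLinearMap.proj (c k).2 ∘L ContinuousLinearMap.proj (r i) ∘L
      ContinuousLinearMap.snd ℝ (N → m → ℝ) (N → n → ℝ)).analyticAt pq
  exact hP.mul hQ

theorem rowKhatriRao_submatrix_singular_measure_zero_general {r : ι → N}
    (hr : Function.Injective r) {c : ι → m × n} (hc : Function.Injective c) :
    volume {pq : (N → m → ℝ) × (N → n → ℝ) |
      ¬ IsUnit ((rowKhatriRao (Matrix.of pq.1) (Matrix.of pq.2)).submatrix r c)} = 0 := by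
  obtain ⟨P, Q, hPQ⟩ := exists_rowKhatriRao_submatrix_eq_one hr hc
  have hvolP : (volume : Measure (N → m → ℝ)).IsAddHaarMeasure := Measure.pi.isAddHaarMeasure _
  have hvolQ : (volume : Measure (N → n → ℝ)).IsAddHaarMeasure := Measure.pi.isAddHaarMeasure _
  have hvol : (volume : Measure ((N → m → ℝ) × (N → n → ℝ))).IsAddHaarMeasure :=
    Measure.prod.instIsAddHaarMeasure _ _
  have hdet : ∀ᵐ pq : (N → m → ℝ) × (N → n → ℝ),
      ((rowKhatriRao (Matrix.of pq.1) (Matrix.of pq.2)).submatrix r c).det ≠ 0 :=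
    ae_ne_zero_of_analyticOnNhd volume (analyticOnNhd_det_rowKhatriRao_submatrix r c)
      (x₀ := (Matrix.of.symm P, Matrix.of.symm Q)) (by simp [hPQ])
  simpa only [ae_iff, Matrix.isUnit_iff_isUnit_det, isUnit_iff_ne_zero] using hdet

end RowKhatriRao

/-- For any choice of `s` rows `R ⊆ [N]` and `s` columns `C ⊆ [m]×[n]`
(given by injections `r : Fin s ↪ Fin N` and `c : Fin s ↪ Fin m × Fin n`),
the set of pairs `(P, Q)` for which the `s × s` submatrix `[P ⊙ Q]_{R,C}` is
singular has Lebesgue measure zero. -/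
theorem rowKhatriRao_submatrix_singular_measure_zero
    (m n N s : ℕ) (hm : 1 ≤ m) (hn : 1 ≤ n) (hN : 1 ≤ N) (hs : 1 ≤ s)
    (hNmn : m * n ≤ N)
    (r : Fin s → Fin N) (hr : Function.Injective r)
    (c : Fin s → Fin m × Fin n) (hc : Function.Injective c) :
    MeasureTheory.volume
        {pq : (Fin N → Fin m → ℝ) × (Fin N → Fin n → ℝ) |
          ¬ IsUnit
              ((rowKhatriRao (Matrix.of pq.1) (Matrix.of pq.2)).submatrix r c)}
      = 0 :=
  rowKhatriRao_submatrix_singular_measure_zero_general hr hc
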